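/- arXiv:2412.00974 — 7 statements merged into one kernel-verified Lean document; each statement's English description precedes it below -/
import Mathlib

section
/- Let n be even, s a positive integer, ε̃ ∈ (0,1/2], and β ∈ (0,0.4]. If s ≤ min(0.00005/β², 0.004·√n/ε̃²), then there exists a probability distribution C on ([n]^s)³ (a multivariate coupling) such that: (a) the three marginals of C are U_n^{⊗s}, P^•, and (p^⋄)^{⊗s} respectively; and (b) with C-probability at least 0.98 the three coordinate sample sequences are equal, i.e. C({(S₁,S₂,S₃) : S₁ = S₂ = S₃}) ≥ 0.98. -/
open Finset

/-- The distribution `p^Z` on `[n] = Fin (2m)`: for a sign vector `Z` (encoded by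
booleans, `true ↦ +1`, `false ↦ −1`), one element of each consecutive pair gets
probability `(1 + 2·Z·ε̃)/n` and the other `(1 − 2·Z·ε̃)/n`. -/
noncomputable def pZ (m : ℕ) (eps : ℝ) (Z : Fin m → Bool) : Fin (2*m) → ℝ :=
  fun i =>
    let sign : ℝ := if Z ⟨i.val / 2, by have := i.isLt; omega⟩ then 1 else -1
    if i.val % 2 = 1 then (1 + 2 * sign * eps) / (2*m)
    else (1 - 2 * sign * eps) / (2*m)

/-- `P^•`: the distribution of `s` i.i.d. samples drawn from `p^Z` where the sign
vector `Z` is itself drawn uniformly at random (a uniform mixture over `Z` of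
`(p^Z)^{⊗s}`). -/
noncomputable def Pbullet (m s : ℕ) (eps : ℝ) (x : Fin s → Fin (2*m)) : ℝ :=
  (∑ Z : Fin m → Bool, ∏ j, pZ m eps Z (x j)) / 2 ^ m

/-- The distribution `p^⋄` on `[n] = Fin (2m)` assigning `(1+2β)/n` to one parity
class and `(1−2β)/n` to the other. -/
noncomputable def pdiamond (m : ℕ) (β : ℝ) : Fin (2*m) → ℝ :=
  fun i => if i.val % 2 = 1 then (1 + 2*β) / (2*m) else (1 - 2*β) / (2*m)

lemma aux_coupling {α : Type*} [Fintype α] [DecidableEq α] (U P Q : α → ℝ)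
    (hU0 : ∀ x, 0 ≤ U x) (hP0 : ∀ x, 0 ≤ P x) (hQ0 : ∀ x, 0 ≤ Q x)
    (hU : ∑ x, U x = 1) (hP : ∑ x, P x = 1) (hQ : ∑ x, Q x = 1)
    (h1 : ∑ x, |P x - U x| ≤ 0.02) (h2 : ∑ x, |Q x - U x| ≤ 0.02) :
    ∃ C : α × α × α → ℝ,
      (∀ t, 0 ≤ C t) ∧ (∑ t, C t = 1) ∧
      (∀ x, (∑ y, ∑ z, C (x, y, z)) = U x) ∧
      (∀ y, (∑ x, ∑ z, C (x, y, z)) = P y) ∧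
      (∀ z, (∑ x, ∑ y, C (x, y, z)) = Q z) ∧
      0.98 ≤ ∑ x, C (x, x, x) := by
  set M : α → ℝ := fun x => min (U x) (min (P x) (Q x)) with hM
  have hM0 : ∀ x, 0 ≤ M x := fun x => le_min (hU0 x) (le_min (hP0 x) (hQ0 x))
  have hMU : ∀ x, 0 ≤ U x - M x := fun x => sub_nonneg.2 (min_le_left _ _)
  have hMP : ∀ x, 0 ≤ P x - M x := fun x =>
    sub_nonneg.2 ((min_le_right _ _).trans (min_le_left _ _))
  have hMQ : ∀ x, 0 ≤ Q x - M x := fun x =>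
    sub_nonneg.2 ((min_le_right _ _).trans (min_le_right _ _))
  set r : ℝ := 1 - ∑ x, M x with hr
  have sU : ∑ x, (U x - M x) = r := by rw [Finset.sum_sub_distrib, hU]
  have sP : ∑ x, (P x - M x) = r := by rw [Finset.sum_sub_distrib, hP]
  have sQ : ∑ x, (Q x - M x) = r := by rw [Finset.sum_sub_distrib, hQ]
  have hr0 : 0 ≤ r := by rw [← sU]; exact Finset.sum_nonneg fun x _ => hMU x
  have key : ∀ V : α → ℝ, (∀ x, 0 ≤ V x - M x) → ∑ x, (V x - M x) = r →
      ∀ x, (V x - M x) * ((r⁻¹)^2 * r * r) = V x - M x := by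
    intro V hV hs x
    by_cases h : r = 0
    · rw [h, Finset.sum_eq_zero_iff_of_nonneg (fun x _ => hV x)] at hs
      rw [hs x (Finset.mem_univ _)]; simp
    · field_simp
  have hlow : 0.98 ≤ ∑ x, M x := by
    have : ∀ x, U x - (|P x - U x| - (P x - U x)) / 2 - (|Q x - U x| - (Q x - U x))/2 ≤ M x := by
      intro x
      refine le_min ?_ (le_min ?_ ?_)
      all_goals
        have a1 := le_abs_self (P x - U x)
        have a2 := neg_abs_le (P x - U x)
        have a3 := le_abs_self (Q x - U x)
        have a4 := neg_abs_le (Q x - U x)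
        linarith
    have h := Finset.sum_le_sum (fun x (_ : x ∈ Finset.univ) => this x)
    simp only [Finset.sum_sub_distrib, ← Finset.sum_div, hU, hP, hQ] at h
    linarith
  have m1 : ∀ x, (∑ y, ∑ z, ((if x = y ∧ y = z then M x else 0) +
        (r⁻¹)^2 * (U x - M x) * (P y - M y) * (Q z - M z))) = U x := by
    intro x
    simp only [Finset.sum_add_distrib, ← Finset.mul_sum, sQ, sP, ← Finset.sum_mul]
    have : ∑ y, ∑ z, (if x = y ∧ y = z then M x else 0) = M x := by
      simp [ite_and]
    rw [this]
    linear_combination key U hMU sU x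
  refine ⟨fun t => (if t.1 = t.2.1 ∧ t.2.1 = t.2.2 then M t.1 else 0) +
    (r⁻¹)^2 * (U t.1 - M t.1) * (P t.2.1 - M t.2.1) * (Q t.2.2 - M t.2.2), ?_, ?_, ?_, ?_, ?_, ?_⟩
  · intro t
    have a := hMU t.1
    have b := hMP t.2.1
    have c := hMQ t.2.2
    have d := hM0 t.1
    have : 0 ≤ (if t.1 = t.2.1 ∧ t.2.1 = t.2.2 then M t.1 else 0) := by split_ifs <;> simp [d]
    positivity
  · rw [Fintype.sum_prod_type]
    simp_rw [Fintype.sum_prod_type]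
    simp only [m1, hU]
  · exact m1
  · intro y
    have : ∀ x, ∑ z, (if x = y ∧ y = z then M x else 0) = if x = y then M x else 0 := by
      intro x; simp [ite_and]
    simp only [Finset.sum_add_distrib, ← Finset.mul_sum, sQ, this]
    simp only [← Finset.sum_mul, ← Finset.mul_sum, sU]
    simp only [Finset.sum_ite_eq', Finset.mem_univ, if_true]
    linear_combination key P hMP sP y
  · intro z
    have : ∀ x, ∑ y, (if x = y ∧ y = z then M x else 0) = if x = z then M x else 0 := by
      intro x; simp [ite_and]
    simp only [Finset.sum_add_distrib, this]
    simp only [← Finset.sum_mul, ← Finset.mul_sum, sU, sP]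
    simp only [Finset.sum_ite_eq', Finset.mem_univ, if_true]
    linear_combination key Q hMQ sQ z
  · refine hlow.trans (Finset.sum_le_sum fun x _ => ?_)
    have a := hMU x
    have b := hMP x
    have c := hMQ x
    simp only [and_self, if_true]
    have : 0 ≤ (r⁻¹)^2 * (U x - M x) * (P x - M x) * (Q x - M x) := by positivity
    linarith

lemma aux_chi {α : Type*} [Fintype α] (P : α → ℝ) (u : ℝ) (hu : Fintype.card α * u = 1)
    (hP : ∑ x, P x = 1)
    (h : Fintype.card α * ∑ x, P x ^ 2 ≤ 1.0004) : ∑ x, |P x - u| ≤ 0.02 := by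
  have cs := sq_sum_le_card_mul_sum_sq (s := (Finset.univ : Finset α)) (f := fun x => |P x - u|)
  have e : ∑ x, |P x - u| ^ 2 = ∑ x, P x ^ 2 - 2 * u + Fintype.card α * u ^ 2 := by
    simp only [sq_abs, sub_sq, Finset.sum_add_distrib, Finset.sum_sub_distrib]
    rw [← Finset.sum_mul, ← Finset.mul_sum, hP]
    simp
  rw [e, Finset.card_univ] at cs
  refine abs_le_of_sq_le_sq' (b := 0.02) ?_ (by norm_num) |>.2
  refine cs.trans ?_
  have : (Fintype.card α : ℝ) * (∑ x, P x ^ 2 - 2 * u + Fintype.card α * u ^ 2)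
    = Fintype.card α * ∑ x, P x ^ 2 - 1 := by
      linear_combination (Fintype.card α * u - 1) * hu
  rw [this]; norm_num at h ⊢; linarith

lemma aux_sum (m : ℕ) (f : Fin (2*m) → ℝ) :
    ∑ i, f i = ∑ k : Fin m, (f ⟨2 * k.val, by omega⟩ + f ⟨2 * k.val + 1, by omega⟩) := by
  rw [← Equiv.sum_comp ((finProdFinEquiv (m := m) (n := 2)).trans (finCongr (mul_comm m 2))),
    Fintype.sum_prod_type]
  refine Finset.sum_congr rfl fun k _ => ?_
  rw [Fin.sum_univ_two]
  congr 2 <;> ext <;> simp [finProdFinEquiv]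
  omega

lemma aux_pow {α : Type*} [Fintype α] [DecidableEq α] (s : ℕ) (f : α → ℝ) :
    ∑ x : Fin s → α, ∏ j, f (x j) = (∑ i, f i) ^ s := by
  have := (Finset.prod_univ_sum (fun _ : Fin s => (Finset.univ : Finset α)) (fun _ => f))
  simp at this
  rw [← this]

lemma aux_exp {x : ℝ} (hx : x ≤ 0.0003) : Real.exp x ≤ 1.0004 := by
  have h1 : 1 - x ≤ Real.exp (-x) := by have := Real.add_one_le_exp (-x); linarith
  have h2 : Real.exp x * Real.exp (-x) = 1 := by rw [← Real.exp_add]; simp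
  have h3 := Real.exp_pos x
  norm_num at hx ⊢
  nlinarith

/-- sign of a boolean -/
noncomputable def sg (b : Bool) : ℝ := if b then 1 else -1

lemma pZ_even (m : ℕ) (eps : ℝ) (Z : Fin m → Bool) (k : Fin m) :
    pZ m eps Z ⟨2 * k.val, by omega⟩ = (1 - 2 * sg (Z k) * eps) / (2*m) := by
  simp [pZ, sg]

lemma pZ_odd (m : ℕ) (eps : ℝ) (Z : Fin m → Bool) (k : Fin m) :
    pZ m eps Z ⟨2 * k.val + 1, by omega⟩ = (1 + 2 * sg (Z k) * eps) / (2*m) := by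
  have h : (⟨(2 * k.val + 1) / 2, by omega⟩ : Fin m) = k := by ext; simp; omega
  simp [pZ, sg, h, Nat.add_mod]

lemma pZ_sum (m : ℕ) (hm : 0 < m) (eps : ℝ) (Z : Fin m → Bool) : ∑ i, pZ m eps Z i = 1 := by
  have : (m : ℝ) ≠ 0 := by positivity
  rw [aux_sum]
  simp only [pZ_even, pZ_odd]
  have : ∀ k, (1 - 2 * sg (Z k) * eps) / (2*m) + (1 + 2 * sg (Z k) * eps) / (2*m) = 1 / (m:ℝ) := by
    intro k; field_simp; ring
  simp only [this]
  simp; field_simp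

lemma pZ_inner (m : ℕ) (hm : 0 < m) (eps : ℝ) (Z Z' : Fin m → Bool) :
    (2 * m) * ∑ i, pZ m eps Z i * pZ m eps Z' i
      = 1 + ∑ k, (4 * eps^2 / m) * (sg (Z k) * sg (Z' k)) := by
  have h0 : (m : ℝ) ≠ 0 := by positivity
  rw [aux_sum]
  simp only [pZ_even, pZ_odd]
  have : (1 : ℝ) = ∑ k : Fin m, 1 / (m:ℝ) := by simp; field_simp
  conv_rhs => rw [this]
  rw [← Finset.sum_add_distrib, Finset.mul_sum]
  refine Finset.sum_congr rfl fun k _ => ?_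
  field_simp; ring

lemma sg_abs (b : Bool) : sg b = 1 ∨ sg b = -1 := by cases b <;> simp [sg]

lemma pZ_nonneg (m : ℕ) (eps : ℝ) (h0 : 0 < eps) (h : eps ≤ 1/2) (Z : Fin m → Bool) (i) :
    0 ≤ pZ m eps Z i := by
  unfold pZ
  dsimp only
  split_ifs <;> apply div_nonneg <;> first | positivity | linarith

lemma aux_P (m s : ℕ) (hm : 0 < m) (eps : ℝ) (h0 : 0 < eps) (h : eps ≤ 1/2)
    (hs : (s : ℝ) ≤ 0.004 * Real.sqrt (2*m) / eps ^ 2) :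
    (2*m : ℝ)^s * ∑ x, Pbullet m s eps x ^ 2 ≤ 1.0004 := by
  have hm' : (0 : ℝ) < m := by positivity
  have e1 : (2*m : ℝ)^s * ∑ x, Pbullet m s eps x ^ 2 =
      (∑ Z : Fin m → Bool, ∑ Z' : Fin m → Bool,
        (1 + ∑ k, (4 * eps^2 / m) * (sg (Z k) * sg (Z' k))) ^ s) / 4 ^ m := by
    have : ∀ x, Pbullet m s eps x ^ 2 =
      (∑ Z : Fin m → Bool, ∑ Z' : Fin m → Bool, ∏ j, (pZ m eps Z (x j) * pZ m eps Z' (x j))) / 4^m := by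
      intro x
      unfold Pbullet
      rw [div_pow, ← pow_mul, mul_comm m 2, pow_mul, sq (∑ Z : Fin m → Bool, _), Finset.sum_mul_sum]
      simp only [Finset.prod_mul_distrib]
      norm_num
    simp only [this]
    rw [← Finset.sum_div, Finset.sum_comm, mul_div_assoc', Finset.mul_sum]
    congr 1
    refine Finset.sum_congr rfl fun Z _ => ?_
    rw [Finset.sum_comm, Finset.mul_sum]
    refine Finset.sum_congr rfl fun Z' _ => ?_
    rw [aux_pow s (fun i => pZ m eps Z i * pZ m eps Z' i), ← mul_pow, pZ_inner m hm]
  set a : ℝ := s * (4 * eps^2 / m) with ha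
  have e2 : ∀ Z Z' : Fin m → Bool, (1 + ∑ k, (4 * eps^2 / m) * (sg (Z k) * sg (Z' k))) ^ s
      ≤ ∏ k, Real.exp (a * (sg (Z k) * sg (Z' k))) := by
    intro Z Z'
    rw [← Real.exp_sum, ← Finset.mul_sum, ← Finset.mul_sum, ha, mul_assoc, Real.exp_nat_mul]
    apply pow_le_pow_left₀
    · rw [Finset.mul_sum, ← pZ_inner m hm]
      exact mul_nonneg (by positivity) (Finset.sum_nonneg fun i _ =>
        mul_nonneg (pZ_nonneg m eps h0 h Z i) (pZ_nonneg m eps h0 h Z' i))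
    · rw [add_comm]; exact Real.add_one_le_exp _
  have e3 : ∀ Z : Fin m → Bool, ∑ Z' : Fin m → Bool, ∏ k, Real.exp (a * (sg (Z k) * sg (Z' k)))
      = (2 * Real.cosh a) ^ m := by
    intro Z
    have := (Finset.prod_univ_sum (fun _ : Fin m => (Finset.univ : Finset Bool))
      (fun k b => Real.exp (a * (sg (Z k) * sg b))))
    rw [Fintype.piFinset_univ] at this
    rw [← this]
    have c : ∀ k, ∑ b, Real.exp (a * (sg (Z k) * sg b)) = 2 * Real.cosh a := by
      intro k
      rw [Real.cosh_eq]
      have st : sg true = 1 := by simp [sg]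
      have sf : sg false = -1 := by simp [sg]
      rw [Fintype.sum_bool, st, sf]
      rcases sg_abs (Z k) with h | h <;> rw [h] <;> simp <;> ring
    rw [Finset.prod_congr rfl fun k _ => c k]
    simp
  have e4 : (2*m : ℝ)^s * ∑ x, Pbullet m s eps x ^ 2 ≤ Real.cosh a ^ m := by
    rw [e1, div_le_iff₀ (by positivity)]
    calc _ ≤ ∑ Z : Fin m → Bool, ∑ Z' : Fin m → Bool,
            ∏ k, Real.exp (a * (sg (Z k) * sg (Z' k))) :=
          Finset.sum_le_sum fun Z _ => Finset.sum_le_sum fun Z' _ => e2 Z Z'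
      _ = Real.cosh a ^ m * 4 ^ m := by
          simp only [e3]
          simp
          rw [← mul_pow, ← mul_pow]; congr 1; ring
  refine e4.trans ((pow_le_pow_left₀ (Real.cosh_pos a).le (Real.cosh_le_exp_half_sq a) m).trans ?_)
  rw [← Real.exp_nat_mul]
  apply aux_exp
  rw [le_div_iff₀ (by positivity)] at hs
  have q : (s * eps^2)^2 ≤ 0.000016 * (2 * m) := by
    have := pow_le_pow_left₀ (by positivity) hs 2
    rw [mul_pow, mul_pow, Real.sq_sqrt (by positivity)] at this
    rw [mul_pow]; norm_num at this ⊢; linarith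
  have : (m : ℝ) * (a^2/2) = 8 * (s * eps^2)^2 / m := by
    rw [ha]; field_simp; ring
  rw [this, div_le_iff₀ hm']
  norm_num at q ⊢; linarith

lemma pd_even (m : ℕ) (β : ℝ) (k : Fin m) :
    pdiamond m β ⟨2 * k.val, by omega⟩ = (1 - 2 * β) / (2*m) := by
  simp [pdiamond]

lemma pd_odd (m : ℕ) (β : ℝ) (k : Fin m) :
    pdiamond m β ⟨2 * k.val + 1, by omega⟩ = (1 + 2 * β) / (2*m) := by
  simp [pdiamond, Nat.add_mod]

lemma aux_Q (m s : ℕ) (hm : 0 < m) (β : ℝ) (h0 : 0 < β) (hs : (s : ℝ) ≤ 0.00005 / β ^ 2) :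
    (2*m : ℝ)^s * ∑ x : Fin s → Fin (2*m), (∏ j, pdiamond m β (x j)) ^ 2 ≤ 1.0004 := by
  have hm' : (m : ℝ) ≠ 0 := by positivity
  simp only [← Finset.prod_pow]
  rw [aux_pow s (fun i => pdiamond m β i ^ 2), ← mul_pow, aux_sum]
  simp only [pd_even, pd_odd]
  have : (2*m : ℝ) * ∑ k : Fin m, (((1 - 2 * β) / (2*m))^2 + ((1 + 2 * β) / (2*m))^2)
    = 1 + 4 * β^2 := by
    simp; field_simp; ring
  rw [this]
  have l : 1 + 4 * β^2 ≤ Real.exp (4 * β^2) := by rw [add_comm]; exact Real.add_one_le_exp _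
  refine (pow_le_pow_left₀ (by positivity) l s).trans ?_
  rw [← Real.exp_nat_mul]
  apply aux_exp
  rw [le_div_iff₀ (by positivity)] at hs
  norm_num at hs ⊢; linarith

theorem stmt3 (m s : ℕ) (hs : 0 < s) (eps β : ℝ)
    (heps : eps ∈ Set.Ioc (0:ℝ) (1/2)) (hβ : β ∈ Set.Ioc (0:ℝ) 0.4)
    (hsamples : (s : ℝ) ≤ min (0.00005 / β ^ 2) (0.004 * Real.sqrt (2*m) / eps ^ 2)) :
    ∃ C : (Fin s → Fin (2*m)) × (Fin s → Fin (2*m)) × (Fin s → Fin (2*m)) → ℝ,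
      (∀ t, 0 ≤ C t) ∧ (∑ t, C t = 1) ∧
      (∀ x, (∑ y, ∑ z, C (x, y, z)) = ∏ _j : Fin s, (1 / (2*m : ℝ))) ∧
      (∀ y, (∑ x, ∑ z, C (x, y, z)) = Pbullet m s eps y) ∧
      (∀ z, (∑ x, ∑ y, C (x, y, z)) = ∏ j, pdiamond m β (z j)) ∧
      0.98 ≤ ∑ x, C (x, x, x) := by
  obtain ⟨he0, he⟩ := heps
  obtain ⟨hb0, hb⟩ := hβ
  have hsB := hsamples.trans (min_le_left _ _)
  have hsE := hsamples.trans (min_le_right _ _)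
  have hm : 0 < m := by
    rcases Nat.eq_zero_or_pos m with h | h
    · subst h
      simp at hsE
      omega
    · exact h
  have hm' : (m : ℝ) ≠ 0 := by positivity
  have hcard : (Fintype.card (Fin s → Fin (2*m)) : ℝ) = (2*m)^s := by simp
  have hu : (Fintype.card (Fin s → Fin (2*m)) : ℝ) * (∏ _j : Fin s, (1 / (2*m : ℝ))) = 1 := by
    rw [hcard]; rw [Finset.prod_const, Finset.card_univ, Fintype.card_fin, ← mul_pow, mul_one_div_cancel (by positivity), one_pow]
  have hPs : ∑ x, Pbullet m s eps x = 1 := by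
    unfold Pbullet
    rw [← Finset.sum_div, Finset.sum_comm]
    simp only [aux_pow, pZ_sum m hm]
    simp
  have hQs : ∑ x : Fin s → Fin (2*m), ∏ j, pdiamond m β (x j) = 1 := by
    rw [aux_pow, aux_sum]
    simp only [pd_even, pd_odd]
    have : ∑ k : Fin m, ((1 - 2 * β) / (2*m) + (1 + 2 * β) / (2*m)) = 1 := by
      simp; field_simp; ring
    rw [this, one_pow]
  have hbb : β ≤ 1/2 := by norm_num at hb ⊢; linarith
  refine aux_coupling _ _ _ (fun x => by positivity) (fun x => ?_) (fun x => ?_) ?_ hPs hQs ?_ ?_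
  · unfold Pbullet
    exact div_nonneg (Finset.sum_nonneg fun Z _ => Finset.prod_nonneg fun j _ =>
      pZ_nonneg m eps he0 he Z _) (by positivity)
  · refine Finset.prod_nonneg fun j _ => ?_
    unfold pdiamond
    split_ifs <;> apply div_nonneg <;> first | positivity | linarith
  · rw [Finset.sum_const, Finset.card_univ, nsmul_eq_mul]; exact hu
  · exact aux_chi _ _ hu hPs (by rw [hcard]; exact aux_P m s hm eps he0 he hsE)
  · exact aux_chi _ _ hu hQs (by rw [hcard]; exact aux_Q m s hm β hb0 hsB)
end

section
/- Let n be even and β ∈ [0, 0.4]. Let p^⋄ be the distribution on [n] assigning probability (1+2β)/n to each even element and (1−2β)/n to each odd element. Then for every positive integer s, the total variation distance between s i.i.d. samples from the uniform distribution and s i.i.d. samples from p^⋄ satisfies tv(U_n^{⊗s} − (p^⋄)^{⊗s}) ≤ √(2s)·β. -/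
/-- Total variation distance `(1/2)·Σₓ |p x − q x|` on a finite set. -/
noncomputable def tvOn {X : Type*} [Fintype X] (p q : X → ℝ) : ℝ :=
  (∑ x, |p x - q x|) / 2

lemma parity_sum (m : ℕ) (a b : ℝ) :
    ∑ i : Fin (2*m), (if i.val % 2 = 1 then a else b) = m * (a + b) := by
  rw [Fin.sum_univ_eq_sum_range (fun i => if i % 2 = 1 then a else b)]
  induction m with
  | zero => simp
  | succ k ih =>
    rw [show 2 * (k+1) = 2*k+1+1 by ring, Finset.sum_range_succ, Finset.sum_range_succ, ih]
    have h1 : ¬ (2*k) % 2 = 1 := by omega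
    have h2 : (2*k+1) % 2 = 1 := by omega
    rw [if_neg h1, if_pos h2]
    push_cast
    ring

lemma tv_hell {X : Type*} [Fintype X] (f g : X → ℝ) (hf : ∀ x, 0 ≤ f x) (hg : ∀ x, 0 ≤ g x)
    (h1 : ∑ x, f x ^ 2 = 1) (h2 : ∑ x, g x ^ 2 = 1) :
    ((∑ x, |f x ^ 2 - g x ^ 2|) / 2) ^ 2 ≤ 1 - (∑ x, f x * g x) ^ 2 := by
  have h := Finset.sum_mul_sq_le_sq_mul_sq Finset.univ (fun x => |f x - g x|)
    (fun x => f x + g x)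
  have e : ∀ x, |f x - g x| * (f x + g x) = |f x ^ 2 - g x ^ 2| := by
    intro x
    rw [← abs_of_nonneg (add_nonneg (hf x) (hg x)), ← abs_mul]
    congr 1
    ring
  have e1 : ∑ x, |f x - g x| ^ 2 = 2 - 2 * ∑ x, f x * g x := by
    have : ∀ x, |f x - g x| ^ 2 = f x ^ 2 + g x ^ 2 - 2 * (f x * g x) := by
      intro x; rw [sq_abs]; ring
    simp_rw [this]
    rw [Finset.sum_sub_distrib, Finset.sum_add_distrib, h1, h2, ← Finset.mul_sum]
    ring
  have e2 : ∑ x, (f x + g x) ^ 2 = 2 + 2 * ∑ x, f x * g x := by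
    have : ∀ x, (f x + g x) ^ 2 = f x ^ 2 + g x ^ 2 + 2 * (f x * g x) := by
      intro x; ring
    simp_rw [this]
    rw [Finset.sum_add_distrib, Finset.sum_add_distrib, h1, h2, ← Finset.mul_sum]
    ring
  simp only [e] at h
  rw [e1, e2] at h
  nlinarith

/-- for even `n = 2m` and `β ∈ [0, 0.4]`, for every positive `s`,
`tv(U_n^{⊗s} − (p^⋄)^{⊗s}) ≤ √(2s)·β`. -/
theorem stmt5 (m : ℕ) (β : ℝ) (hβ : β ∈ Set.Icc (0:ℝ) 0.4) (s : ℕ) (hs : 0 < s) :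
    tvOn (fun _x : Fin s → Fin (2*m) => ∏ _j : Fin s, (1 / (2*m : ℝ)))
         (fun x : Fin s → Fin (2*m) => ∏ j, pdiamond m β (x j))
      ≤ Real.sqrt (2*s) * β := by
  obtain ⟨hb0, hb1⟩ := hβ
  norm_num at hb1
  have hR : 0 ≤ Real.sqrt (2*s) * β := by positivity
  rcases Nat.eq_zero_or_pos m with rfl | hm
  · have : IsEmpty (Fin s → Fin (2*0)) := ⟨fun x => (x ⟨0, hs⟩).elim0⟩
    unfold tvOn
    rw [Finset.univ_eq_empty, Finset.sum_empty]
    simpa using hR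
  have hm' : (0:ℝ) < m := by exact_mod_cast hm
  obtain ⟨u, hu0, hu⟩ : ∃ u : ℝ, 0 ≤ u ∧ u^2 = 1/(2*m) :=
    ⟨_, Real.sqrt_nonneg _, Real.sq_sqrt (by positivity)⟩
  obtain ⟨a, ha0, ha⟩ : ∃ u : ℝ, 0 ≤ u ∧ u^2 = (1+2*β)/(2*m) :=
    ⟨_, Real.sqrt_nonneg _, Real.sq_sqrt (by positivity)⟩
  obtain ⟨b, hb0', hb⟩ : ∃ u : ℝ, 0 ≤ u ∧ u^2 = (1-2*β)/(2*m) :=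
    ⟨_, Real.sqrt_nonneg _, Real.sq_sqrt (div_nonneg (by linarith) (by positivity))⟩
  set q : Fin (2*m) → ℝ := fun i => if i.val % 2 = 1 then a else b with hq
  have hq0 : ∀ i, 0 ≤ q i := by intro i; simp only [hq]; split_ifs <;> assumption
  have hq2 : ∀ i, pdiamond m β i = q i ^ 2 := by
    intro i; simp only [hq, pdiamond]; split_ifs <;> simp [ha, hb]
  have hqs : ∑ i, q i = m * (a + b) := parity_sum m a b
  have hqs2 : ∑ i, q i ^ 2 = 1 := by
    simp_rw [← hq2]
    unfold pdiamond
    rw [parity_sum]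
    field_simp
    ring
  have key := tv_hell (X := Fin s → Fin (2*m)) (fun _ => ∏ _j : Fin s, u)
    (fun x => ∏ j, q (x j)) (fun _ => Finset.prod_nonneg fun _ _ => hu0)
    (fun x => Finset.prod_nonneg fun j _ => hq0 _)
    (by
      simp_rw [← Finset.prod_pow]
      rw [← Fintype.sum_pow (fun _ : Fin (2*m) => u^2) s, hu]
      simp
      rw [show (2 * (m:ℝ) * ((m:ℝ)⁻¹ * 2⁻¹)) = 1 by field_simp, one_pow])
    (by
      simp_rw [← Finset.prod_pow]
      rw [← Fintype.sum_pow (fun i => q i ^2) s, hqs2, one_pow])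
  simp_rw [← Finset.prod_mul_distrib, ← Finset.prod_pow, ← hq2, hu] at key
  rw [← Fintype.sum_pow (fun i => u * q i) s, ← Finset.mul_sum, hqs, ← pow_mul, mul_comm s 2,
    pow_mul] at key
  have hab : (1 - 4*β^2)/(2*m) ≤ a * b := by
    refine (abs_le_of_sq_le_sq' ?_ (mul_nonneg ha0 hb0')).2
    rw [mul_pow, ha, hb, div_pow, div_mul_div_comm, ← sq]
    apply div_le_div_of_nonneg_right _ (by positivity)
    nlinarith [mul_nonneg hb0 (sub_nonneg.2 hb1), sq_nonneg β]
  have hB : 1 - 2*β^2 ≤ (u * (m * (a+b)))^2 := by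
    have : (u * (m * (a+b)))^2 = u^2 * m^2 * (a^2 + b^2 + 2*(a*b)) := by ring
    rw [this, hu, ha, hb]
    calc 1 - 2*β^2 = 1/(2*m) * m^2 * ((1+2*β)/(2*m) + (1-2*β)/(2*m) + 2*((1 - 4*β^2)/(2*m))) := by
          field_simp; ring
      _ ≤ _ := by gcongr
  have hbern := one_add_mul_le_pow (a := -(2*β^2)) (by nlinarith) s
  have hpow : (1 + -(2*β^2))^s ≤ ((u * (m * (a+b)))^2)^s :=
    pow_le_pow_left₀ (by nlinarith) (by linarith) s
  refine (abs_le_of_sq_le_sq' ?_ hR).2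
  rw [mul_pow, Real.sq_sqrt (by positivity)]
  unfold tvOn
  linarith
end

section
/- Let p and p̂ be probability distributions on [n] with tv(p − p̂) ≤ α, let s_f > 0, and let ν ∈ (0,1]. Draw N ∼ Poisson(s_f), then draw N i.i.d. samples from p, and let f_i be the number of occurrences of element i among these samples. Define m_i := ⌊p̂_i/ν⌋ + f_i + 1 for each i ∈ [n]. Then E[Σ_{i=1}^n p_i²/m_i] ≤ 2α/s_f + 4ν, and moreover E[Σ_{i=1}^n m_i] ≤ n + 1/ν + s_f, where both expectations are over the randomness of the samples from p. -/
open Finset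

/-- `p` is a probability distribution on `Fin n`. -/
def IsDist {n : ℕ} (p : Fin n → ℝ) : Prop :=
  (∀ i, 0 ≤ p i) ∧ ∑ i, p i = 1

/-- Total variation distance `(1/2)·Σᵢ |pᵢ − qᵢ|`. -/
noncomputable def tv {n : ℕ} (p q : Fin n → ℝ) : ℝ :=
  (∑ i, |p i - q i|) / 2

/-- The Poisson probability mass function with mean `lam`. -/
noncomputable def poissonPdf (lam : ℝ) (k : ℕ) : ℝ :=
  Real.exp (-lam) * lam ^ k / (Nat.factorial k)

/-- Number of occurrences of the element `i` in the sample sequence `x`. -/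
def freq {n N : ℕ} (x : Fin N → Fin n) (i : Fin n) : ℕ :=
  (Finset.univ.filter (fun j => x j = i)).card

lemma aux_sum_prod {n : ℕ} (p : Fin n → ℝ) (hp : IsDist p) (N : ℕ) :
    ∑ x : Fin N → Fin n, ∏ j, p (x j) = 1 := by
  have h := (Finset.prod_univ_sum (fun _ : Fin N => (Finset.univ : Finset (Fin n)))
    (fun _ i => p i)).symm
  rw [Fintype.piFinset_univ] at h
  rw [h]
  simp [hp.2]

lemma aux_freq_sum {n N : ℕ} (x : Fin N → Fin n) : ∑ i, (freq x i : ℝ) = N := by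
  have h := Finset.card_eq_sum_card_fiberwise (f := x) (s := Finset.univ) (t := Finset.univ)
    (by simp)
  simp only [Finset.card_univ, Fintype.card_fin] at h
  unfold freq
  exact_mod_cast h.symm

lemma aux_freq_eq {n N : ℕ} (x : Fin N → Fin n) (i : Fin n) :
    (freq x i : ℝ) = ∑ j, if x j = i then (1:ℝ) else 0 := by
  simp [freq]

lemma aux_freq_insert {n N : ℕ} (x : Fin N → Fin n) (i k : Fin n) (j : Fin (N+1)) :
    (freq (j.insertNth k x : Fin (N+1) → Fin n) i : ℝ)
      = (if k = i then 1 else 0) + freq x i := by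
  rw [aux_freq_eq, aux_freq_eq, Fin.sum_univ_succAbove _ j]
  simp

lemma aux_step {n N : ℕ} (p : Fin n → ℝ) (i : Fin n) (j : Fin (N+1)) :
    ∑ y : Fin (N+1) → Fin n, (∏ l, p (y l)) * ((if y j = i then (1:ℝ) else 0) / freq y i)
      = p i * ∑ x : Fin N → Fin n, (∏ l, p (x l)) * (1 / ((freq x i : ℝ) + 1)) := by
  rw [← (Fin.insertNthEquiv (fun _ => Fin n) j).sum_comp, Fintype.sum_prod_type]
  simp only [Fin.insertNthEquiv, Equiv.coe_fn_mk, aux_freq_insert,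
    Fin.prod_univ_succAbove _ j, Fin.insertNth_apply_same, Fin.insertNth_apply_succAbove]
  rw [Finset.sum_eq_single i]
  · rw [Finset.mul_sum]
    refine Finset.sum_congr rfl fun x _ => ?_
    simp only [if_true]
    rw [add_comm (1:ℝ)]
    ring
  · intro k _ hk
    simp [hk]
  · simp

lemma aux_key {n N : ℕ} (p : Fin n → ℝ) (hp : IsDist p) (i : Fin n) :
    p i * ∑ x : Fin N → Fin n, (∏ l, p (x l)) * (1 / ((freq x i : ℝ) + 1))
      ≤ 1 / ((N : ℝ) + 1) := by
  rw [le_div_iff₀ (by positivity)]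
  have h : ∑ j : Fin (N+1), ∑ y : Fin (N+1) → Fin n,
      (∏ l, p (y l)) * ((if y j = i then (1:ℝ) else 0) / freq y i) ≤ 1 := by
    rw [Finset.sum_comm]
    refine le_trans ?_ (aux_sum_prod p hp (N+1)).le
    refine Finset.sum_le_sum fun y _ => ?_
    rw [← Finset.mul_sum, ← Finset.sum_div, ← aux_freq_eq]
    exact mul_le_of_le_one_right (Finset.prod_nonneg fun l _ => hp.1 _) (div_self_le_one _)
  simp only [aux_step] at h
  simp only [Finset.sum_const, Finset.card_univ, Fintype.card_fin, nsmul_eq_mul] at h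
  push_cast at h
  linarith

lemma aux_pois (s : ℝ) : HasSum (poissonPdf s) 1 := by
  have h := (NormedSpace.expSeries_div_hasSum_exp s).mul_left (Real.exp (-s))
  rw [← Real.exp_eq_exp_ℝ, ← Real.exp_add] at h
  simp only [neg_add_cancel, Real.exp_zero] at h
  refine h.congr_fun ?_
  intro k
  unfold poissonPdf
  ring

lemma aux_pois_nonneg (s : ℝ) (hs : 0 < s) (k : ℕ) : 0 ≤ poissonPdf s k := by
  unfold poissonPdf
  positivity

lemma aux_pois_succ (s : ℝ) (k : ℕ) :
    poissonPdf s (k+1) * ((k:ℝ)+1) = s * poissonPdf s k := by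
  unfold poissonPdf
  rw [Nat.factorial_succ]
  push_cast
  have : (k.factorial : ℝ) ≠ 0 := by positivity
  have : (k:ℝ)+1 ≠ 0 := by positivity
  field_simp
  ring

lemma aux_pois_mean (s : ℝ) : HasSum (fun k : ℕ => poissonPdf s k * (k:ℝ)) s := by
  rw [← hasSum_nat_add_iff' 1]
  have h := (aux_pois s).mul_left s
  simpa [aux_pois_succ] using h

lemma aux_pois_inv (s : ℝ) (hs : 0 < s) :
    HasSum (fun k : ℕ => poissonPdf s k * (1 / ((k:ℝ)+1))) ((1 - Real.exp (-s)) / s) := by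
  have h := ((hasSum_nat_add_iff' 1).mpr (aux_pois s)).div_const s
  have e : (1 - ∑ i ∈ Finset.range 1, poissonPdf s i) / s = (1 - Real.exp (-s)) / s := by
    simp [poissonPdf]
  rw [e] at h
  refine h.congr_fun ?_
  intro k
  have h1 := aux_pois_succ s k
  have : (k:ℝ)+1 ≠ 0 := by positivity
  field_simp
  linarith

lemma aux_inner {n : ℕ} (p phat : Fin n → ℝ) (hp : IsDist p) (hphat : IsDist phat)
    (α ν : ℝ) (hα : tv p phat ≤ α) (hν : 0 < ν) (N : ℕ) :
    ∑ x : Fin N → Fin n, (∏ j, p (x j)) *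
        ∑ i, (p i) ^ 2 / ((⌊phat i / ν⌋ : ℝ) + (freq x i : ℝ) + 1)
      ≤ 2 * ν + 2 * α * (1 / ((N:ℝ)+1)) := by
  have hN : 0 < 1 / ((N:ℝ)+1) := by positivity
  have hterm : ∀ i, ∑ x : Fin N → Fin n, (∏ j, p (x j)) *
        ((p i) ^ 2 / ((⌊phat i / ν⌋ : ℝ) + (freq x i : ℝ) + 1))
      ≤ 2 * ν * p i + (|p i - phat i| + (p i - phat i)) * (1 / ((N:ℝ)+1)) := by
    intro i
    have hpi := hp.1 i
    have hqi := hphat.1 i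
    have hb : (0:ℝ) ≤ (⌊phat i / ν⌋ : ℝ) := by
      exact_mod_cast Int.floor_nonneg.mpr (div_nonneg hqi hν.le)
    have hb1 : phat i ≤ ν * ((⌊phat i / ν⌋ : ℝ) + 1) := by
      have := (Int.lt_floor_add_one (phat i / ν)).le
      rw [div_le_iff₀ hν] at this
      linarith
    have hprod : ∀ x : Fin N → Fin n, 0 ≤ ∏ j, p (x j) :=
      fun x => Finset.prod_nonneg fun l _ => hp.1 _
    have habs : 0 ≤ |p i - phat i| + (p i - phat i) := by
      linarith [neg_abs_le (p i - phat i)]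
    by_cases hc : p i ≤ 2 * phat i
    · have h1 : ∑ x : Fin N → Fin n, (∏ j, p (x j)) *
          ((p i) ^ 2 / ((⌊phat i / ν⌋ : ℝ) + (freq x i : ℝ) + 1))
          ≤ ∑ x : Fin N → Fin n, (∏ j, p (x j)) * (2 * ν * p i) := by
        refine Finset.sum_le_sum fun x _ => mul_le_mul_of_nonneg_left ?_ (hprod x)
        have hf : (0:ℝ) ≤ freq x i := by positivity
        rw [div_le_iff₀ (by positivity)]
        have : p i ≤ 2 * (ν * ((⌊phat i / ν⌋ : ℝ) + (freq x i : ℝ) + 1)) := by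
          nlinarith
        nlinarith
      rw [← Finset.sum_mul, aux_sum_prod p hp, one_mul] at h1
      have := mul_nonneg habs hN.le
      linarith
    · push Not at hc
      have h1 : ∑ x : Fin N → Fin n, (∏ j, p (x j)) *
          ((p i) ^ 2 / ((⌊phat i / ν⌋ : ℝ) + (freq x i : ℝ) + 1))
          ≤ ∑ x : Fin N → Fin n, p i * (p i * ((∏ j, p (x j)) * (1 / ((freq x i : ℝ) + 1)))) := by
        refine Finset.sum_le_sum fun x _ => ?_
        have hf : (0:ℝ) ≤ freq x i := by positivity
        have h2 : (p i) ^ 2 / ((⌊phat i / ν⌋ : ℝ) + (freq x i : ℝ) + 1)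
            ≤ (p i) ^ 2 / ((freq x i : ℝ) + 1) := by
          apply div_le_div_of_nonneg_left (by positivity) (by positivity)
          linarith
        calc _ ≤ _ := mul_le_mul_of_nonneg_left h2 (hprod x)
          _ = _ := by ring
      rw [← Finset.mul_sum, ← Finset.mul_sum] at h1
      have h3 := mul_le_mul_of_nonneg_left (aux_key (N := N) p hp i) hpi
      have h4 : p i ≤ |p i - phat i| + (p i - phat i) := by
        linarith [le_abs_self (p i - phat i)]
      have h5 := mul_le_mul_of_nonneg_right h4 hN.le
      have h6 : 0 ≤ 2 * ν * p i := by positivity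
      linarith
  simp only [Finset.mul_sum]
  rw [Finset.sum_comm]
  refine (Finset.sum_le_sum fun i _ => hterm i).trans ?_
  rw [Finset.sum_add_distrib, ← Finset.mul_sum, ← Finset.sum_mul, Finset.sum_add_distrib,
    Finset.sum_sub_distrib, hp.2, hphat.2]
  unfold tv at hα
  have : (∑ i, |p i - phat i|) ≤ 2 * α := by linarith
  have := mul_le_mul_of_nonneg_right this hN.le
  linarith

/-- augmented flattening: let `tv(p − phat) ≤ α`, `sf > 0` and
`ν ∈ (0,1]`.  Draw `N ∼ Poisson(sf)`, then `N` i.i.d. samples from `p`, let `fᵢ`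
be the frequency of `i`, and set `mᵢ := ⌊phatᵢ/ν⌋ + fᵢ + 1`.  Then
`E[Σᵢ pᵢ²/mᵢ] ≤ 2α/sf + 4ν` and `E[Σᵢ mᵢ] ≤ n + 1/ν + sf`, where the expectation
(written out as a sum over `N` and over all sample sequences) is over the
randomness of the samples. -/
theorem stmt10 (n : ℕ) (p phat : Fin n → ℝ) (hp : IsDist p) (hphat : IsDist phat)
    (α sf ν : ℝ) (hα : tv p phat ≤ α) (hsf : 0 < sf) (hν : ν ∈ Set.Ioc (0:ℝ) 1) :
    (∑' N : ℕ, poissonPdf sf N * ∑ x : Fin N → Fin n, (∏ j, p (x j)) *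
        ∑ i, (p i) ^ 2 / ((⌊phat i / ν⌋ : ℝ) + (freq x i : ℝ) + 1))
      ≤ 2 * α / sf + 4 * ν ∧
    (∑' N : ℕ, poissonPdf sf N * ∑ x : Fin N → Fin n, (∏ j, p (x j)) *
        ∑ i, ((⌊phat i / ν⌋ : ℝ) + (freq x i : ℝ) + 1))
      ≤ (n : ℝ) + 1 / ν + sf := by
  obtain ⟨hν0, hν1⟩ := hν
  constructor
  · have hα0 : 0 ≤ α := by
      refine le_trans ?_ hα
      unfold tv
      positivity
    have hs := ((aux_pois sf).mul_right (2 * ν)).add ((aux_pois_inv sf hsf).mul_right (2 * α))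
    have hle : ∀ N : ℕ, poissonPdf sf N * ∑ x : Fin N → Fin n, (∏ j, p (x j)) *
        ∑ i, (p i) ^ 2 / ((⌊phat i / ν⌋ : ℝ) + (freq x i : ℝ) + 1)
        ≤ poissonPdf sf N * (2 * ν) + poissonPdf sf N * (1 / ((N:ℝ)+1)) * (2 * α) := by
      intro N
      have := mul_le_mul_of_nonneg_left (aux_inner p phat hp hphat α ν hα hν0 N)
        (aux_pois_nonneg sf hsf N)
      linarith
    have hnn : ∀ N : ℕ, 0 ≤ poissonPdf sf N * ∑ x : Fin N → Fin n, (∏ j, p (x j)) *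
        ∑ i, (p i) ^ 2 / ((⌊phat i / ν⌋ : ℝ) + (freq x i : ℝ) + 1) := by
      intro N
      refine mul_nonneg (aux_pois_nonneg sf hsf N) (Finset.sum_nonneg fun x _ =>
        mul_nonneg (Finset.prod_nonneg fun l _ => hp.1 _) (Finset.sum_nonneg fun i _ => ?_))
      have hb : (0:ℝ) ≤ (⌊phat i / ν⌋ : ℝ) := by
        exact_mod_cast Int.floor_nonneg.mpr (div_nonneg (hphat.1 i) hν0.le)
      positivity
    have hsum := Summable.of_nonneg_of_le hnn hle hs.summable
    refine (hasSum_le hle hsum.hasSum hs).trans ?_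
    have h1 : (1 - Real.exp (-sf)) / sf * (2 * α) ≤ 2 * α / sf := by
      rw [div_mul_eq_mul_div]
      apply div_le_div_of_nonneg_right _ hsf.le
      have := Real.exp_pos (-sf)
      nlinarith
    linarith
  · have hin : ∀ N : ℕ, poissonPdf sf N * ∑ x : Fin N → Fin n, (∏ j, p (x j)) *
        ∑ i, ((⌊phat i / ν⌋ : ℝ) + (freq x i : ℝ) + 1)
        = poissonPdf sf N * (∑ i, (⌊phat i / ν⌋ : ℝ) + n) + poissonPdf sf N * (N:ℝ) := by
      intro N
      simp only [Finset.sum_add_distrib, aux_freq_sum]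
      rw [← Finset.sum_mul, aux_sum_prod p hp]
      simp
      ring
    simp only [hin]
    rw [(((aux_pois sf).mul_right _).add (aux_pois_mean sf)).tsum_eq]
    have : ∑ i, (⌊phat i / ν⌋ : ℝ) ≤ 1 / ν := by
      rw [← hphat.2, Finset.sum_div]
      exact Finset.sum_le_sum fun i _ => Int.floor_le _
    linarith
end

section
/- Let p = (p_1,...,p_n) be a probability distribution on [n], let p̂_1,...,p̂_n be positive reals, and let v ∈ (0,1]. Define m_i := ⌊p̂_i/v⌋ + 1 for each i ∈ [n]. Then Σ_{i=1}^n p_i²/m_i ≤ v·Σ_{i=1}^n p_i²/p̂_i, and Σ_{i=1}^n m_i ≤ n + (1/v)·Σ_{i=1}^n p̂_i. -/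
open Finset

/-- flattening with estimates: let `p` be a distribution on
`[n]`, `phatᵢ > 0` and `v ∈ (0,1]`, and set `mᵢ := ⌊phatᵢ/v⌋ + 1`.  Then
`Σᵢ pᵢ²/mᵢ ≤ v·Σᵢ pᵢ²/phatᵢ` and `Σᵢ mᵢ ≤ n + (1/v)·Σᵢ phatᵢ`. -/
theorem stmt12 (n : ℕ) (p phat : Fin n → ℝ) (hp : IsDist p)
    (hphat : ∀ i, 0 < phat i) (v : ℝ) (hv : v ∈ Set.Ioc (0:ℝ) 1) :
    (∑ i, (p i) ^ 2 / ((⌊phat i / v⌋ : ℝ) + 1)) ≤ v * ∑ i, (p i) ^ 2 / phat i ∧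
    (∑ i, ((⌊phat i / v⌋ : ℝ) + 1)) ≤ (n : ℝ) + (1 / v) * ∑ i, phat i := by
  have hv0 : 0 < v := hv.1
  constructor
  · rw [Finset.mul_sum]
    refine Finset.sum_le_sum fun i _ => ?_
    have h1 : phat i / v < (⌊phat i / v⌋ : ℝ) + 1 := Int.lt_floor_add_one _
    have h2 : 0 < phat i / v := div_pos (hphat i) hv0
    have h3 : v * ((p i) ^ 2 / phat i) = (p i) ^ 2 / (phat i / v) := by
      have := (hphat i).ne'
      field_simp
    rw [h3]
    exact div_le_div_of_nonneg_left (sq_nonneg _) h2 h1.le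
  · have h : ∑ i, ((⌊phat i / v⌋ : ℝ) + 1) ≤ ∑ i, (1 / v * phat i + 1) := by
      refine Finset.sum_le_sum fun i _ => ?_
      have h1 : (⌊phat i / v⌋ : ℝ) ≤ phat i / v := Int.floor_le _
      have h2 : 1 / v * phat i = phat i / v := by ring
      linarith
    refine h.trans (le_of_eq ?_)
    rw [Finset.sum_add_distrib, ← Finset.mul_sum]
    simp
    ring
end

section
/- Let p be a probability distribution on [n] and let s ≥ 160·√n be an integer. Let x_1,...,x_s be i.i.d. samples from p and let X := Σ_{1 ≤ i < j ≤ s} 1[x_i = x_j] be the number of colliding pairs. Then P( |X/C(s,2) − ‖p‖₂²| ≥ ‖p‖₂²/2 ) ≤ 0.1, where C(s,2) = s(s−1)/2 and ‖p‖₂² = Σ_{i=1}^n p_i². -/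
open Finset
open scoped Classical

/-- The number of colliding pairs among the samples `x₁, …, x_s`. -/
def collisions {n s : ℕ} (x : Fin s → Fin n) : ℕ :=
  (Finset.univ.filter (fun ij : Fin s × Fin s => ij.1 < ij.2 ∧ x ij.1 = x ij.2)).card


noncomputable def EE {n : ℕ} (p : Fin n → ℝ) (s : ℕ) (f : (Fin s → Fin n) → ℝ) : ℝ :=
  ∑ x : Fin s → Fin n, (∏ j, p (x j)) * f x

lemma EE_succ {n : ℕ} (p : Fin n → ℝ) (s : ℕ) (f : (Fin (s+1) → Fin n) → ℝ) :
    EE p (s+1) f = ∑ a, p a * EE p s (fun x => f (Fin.cons a x)) := by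
  unfold EE
  rw [← (Fin.consEquiv (fun _ : Fin (s+1) => Fin n)).sum_comp, Fintype.sum_prod_type]
  refine Finset.sum_congr rfl fun a _ => ?_
  rw [Finset.mul_sum]
  refine Finset.sum_congr rfl fun x _ => ?_
  simp [Fin.consEquiv, Fin.prod_univ_succ, mul_assoc]

lemma EE_zero {n : ℕ} (p : Fin n → ℝ) (f : (Fin 0 → Fin n) → ℝ) :
    EE p 0 f = f Fin.elim0 := by
  unfold EE
  simp only [Finset.univ_unique, Finset.sum_singleton, Finset.univ_eq_empty, Finset.prod_empty, one_mul]
  congr 1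

lemma EE_add {n : ℕ} (p : Fin n → ℝ) (s : ℕ) (f g : (Fin s → Fin n) → ℝ) :
    EE p s (fun x => f x + g x) = EE p s f + EE p s g := by
  simp [EE, mul_add, Finset.sum_add_distrib]

lemma EE_mul {n : ℕ} (p : Fin n → ℝ) (s : ℕ) (c : ℝ) (f : (Fin s → Fin n) → ℝ) :
    EE p s (fun x => c * f x) = c * EE p s f := by
  simp only [EE, Finset.mul_sum]
  exact Finset.sum_congr rfl fun _ _ => by ring

lemma EE_sum {n : ℕ} (p : Fin n → ℝ) (s : ℕ) (F : Fin n → (Fin s → Fin n) → ℝ) :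
    EE p s (fun x => ∑ a, F a x) = ∑ a, EE p s (F a) := by
  simp only [EE, Finset.mul_sum]
  exact Finset.sum_comm

lemma EE_one {n : ℕ} (p : Fin n → ℝ) (h1 : ∑ i, p i = 1) (s : ℕ) :
    EE p s (fun _ => 1) = 1 := by
  induction s with
  | zero => rw [EE_zero]
  | succ s ih => rw [EE_succ]; simp [ih, h1]

lemma EE_const {n : ℕ} (p : Fin n → ℝ) (h1 : ∑ i, p i = 1) (s : ℕ) (c : ℝ) :
    EE p s (fun _ => c) = c := by
  have := EE_mul p s c (fun _ => 1)
  rw [EE_one p h1] at this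
  simpa using this

def SS {n : ℕ} (φ : Fin n → ℝ) (s : ℕ) (x : Fin s → Fin n) : ℝ := ∑ j, φ (x j)

lemma SS_cons {n : ℕ} (φ : Fin n → ℝ) (s : ℕ) (a : Fin n) (x : Fin s → Fin n) :
    SS φ (s+1) (Fin.cons a x) = φ a + SS φ s x := by
  simp [SS, Fin.sum_univ_succ]

lemma EE_SS {n : ℕ} (p : Fin n → ℝ) (h1 : ∑ i, p i = 1) (φ : Fin n → ℝ) (s : ℕ) :
    EE p s (SS φ s) = s * ∑ a, p a * φ a := by
  induction s with
  | zero => rw [EE_zero]; simp [SS]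
  | succ s ih =>
    rw [EE_succ]
    simp only [SS_cons, EE_add, EE_const p h1, ih, mul_add, Finset.sum_add_distrib,
      ← Finset.sum_mul, h1]
    push_cast; ring

lemma EE_SS2 {n : ℕ} (p : Fin n → ℝ) (h1 : ∑ i, p i = 1) (φ ψ : Fin n → ℝ) (s : ℕ) :
    EE p s (fun x => SS φ s x * SS ψ s x) = s * ∑ a, p a * (φ a * ψ a)
      + s * (s - 1) * ((∑ a, p a * φ a) * ∑ a, p a * ψ a) := by
  induction s with
  | zero => rw [EE_zero]; simp [SS]
  | succ s ih =>
    rw [EE_succ]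
    have key : ∀ a, EE p s (fun x => SS φ (s+1) (Fin.cons a x) * SS ψ (s+1) (Fin.cons a x))
        = φ a * ψ a + φ a * (s * ∑ a, p a * ψ a) + ψ a * (s * ∑ a, p a * φ a)
          + EE p s (fun x => SS φ s x * SS ψ s x) := by
      intro a
      rw [← EE_SS p h1, ← EE_SS p h1, ← EE_mul, ← EE_mul]
      nth_rewrite 1 [← EE_const p h1 s (φ a * ψ a)]
      rw [← EE_add, ← EE_add, ← EE_add]
      congr 1; funext x
      rw [SS_cons, SS_cons]; ring
    simp only [key, ih, mul_add, Finset.sum_add_distrib]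
    simp only [← mul_assoc, ← Finset.sum_mul, h1]
    push_cast; ring

noncomputable def YY {n : ℕ} (q : ℝ) (a b : Fin n) : ℝ := (if a = b then 1 else 0) - q

noncomputable def ZZ {n : ℕ} (q : ℝ) (s : ℕ) (x : Fin s → Fin n) : ℝ :=
  (collisions x : ℝ) - (s : ℝ) * ((s : ℝ) - 1) / 2 * q

lemma coll_eq {n s : ℕ} (x : Fin s → Fin n) :
    (collisions x : ℝ) = ∑ i, ∑ j, if i < j ∧ x i = x j then (1:ℝ) else 0 := by
  unfold collisions
  rw [Finset.card_filter, Fintype.sum_prod_type]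
  push_cast
  rfl

lemma coll_cons {n s : ℕ} (a : Fin n) (x : Fin s → Fin n) :
    (collisions (Fin.cons a x : Fin (s+1) → Fin n) : ℝ)
      = (∑ j, if a = x j then (1:ℝ) else 0) + collisions x := by
  rw [coll_eq, coll_eq, Fin.sum_univ_succ]
  congr 1
  · rw [Fin.sum_univ_succ]
    simp only [lt_irrefl, false_and, if_false, zero_add, Fin.cons_zero, Fin.cons_succ,
      Fin.succ_pos, true_and]
  · refine Finset.sum_congr rfl fun i _ => ?_
    rw [Fin.sum_univ_succ]
    simp only [Fin.not_lt_zero, false_and, if_false, zero_add, Fin.cons_succ,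
      Fin.succ_lt_succ_iff]

lemma ZZ_cons {n s : ℕ} (q : ℝ) (a : Fin n) (x : Fin s → Fin n) :
    ZZ q (s+1) (Fin.cons a x) = ZZ q s x + SS (YY q a) s x := by
  unfold ZZ SS YY
  rw [coll_cons, Finset.sum_sub_distrib]
  simp only [Finset.sum_const, Finset.card_univ, Fintype.card_fin, nsmul_eq_mul]
  push_cast; ring

lemma ZZ_zero {n : ℕ} (q : ℝ) (x : Fin 0 → Fin n) : ZZ q 0 x = 0 := by
  simp [ZZ, coll_eq]

section
variable {n : ℕ} (p : Fin n → ℝ) (h1 : ∑ i, p i = 1) (q : ℝ) (hq : q = ∑ i, (p i)^2)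

lemma sum_pY (h1 : ∑ i, p i = 1) (a : Fin n) : ∑ b, p b * YY q a b = p a - q := by
  simp [YY, mul_sub, Finset.sum_sub_distrib, ← Finset.sum_mul, h1]

lemma YY_symm (a b : Fin n) : YY q a b = YY q b a := by simp [YY, eq_comm]

lemma sum_pSY (h1 : ∑ i, p i = 1) (s : ℕ) (x : Fin s → Fin n) :
    ∑ a, p a * SS (YY q a) s x = SS (fun b => p b - q) s x := by
  simp only [SS, Finset.mul_sum]
  rw [Finset.sum_comm]
  refine Finset.sum_congr rfl fun j _ => ?_
  rw [← sum_pY p q h1]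
  exact Finset.sum_congr rfl fun a _ => by rw [YY_symm]

lemma sum_pg (h1 : ∑ i, p i = 1) (hq : q = ∑ i, (p i)^2) : ∑ a, p a * (p a - q) = 0 := by
  simp only [mul_sub, Finset.sum_sub_distrib, ← Finset.sum_mul, h1, hq]
  simp [pow_two]

lemma EE_ZG (h1 : ∑ i, p i = 1) (hq : q = ∑ i, (p i)^2) (s : ℕ) :
    EE p s (fun x => ZZ q s x * SS (fun b => p b - q) s x)
      = s * (s - 1) * ∑ a, p a * (p a - q)^2 := by
  induction s with
  | zero => rw [EE_zero]; simp [SS]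
  | succ s ih =>
    rw [EE_succ]
    have key : ∀ a, EE p s (fun x => ZZ q (s+1) (Fin.cons a x) *
          SS (fun b => p b - q) (s+1) (Fin.cons a x))
        = EE p s (fun x => ZZ q s x * SS (fun b => p b - q) s x)
          + (p a - q) * EE p s (ZZ q s)
          + s * ∑ b, p b * (YY q a b * (p b - q)) + (p a - q) * (s * (p a - q)) := by
      intro a
      have e1 := EE_SS2 p h1 (YY q a) (fun b => p b - q) s
      have e2 := EE_SS p h1 (YY q a) s
      rw [sum_pg p q h1 hq, mul_zero, mul_zero, add_zero] at e1
      rw [sum_pY p q h1] at e2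
      rw [← e1, ← e2, ← EE_mul, ← EE_mul, ← EE_add, ← EE_add, ← EE_add]
      congr 1; funext x
      rw [SS_cons, ZZ_cons]; ring
    have e3 : ∑ a, p a * (s * ∑ b, p b * (YY q a b * (p b - q)))
        = s * ∑ a, p a * (p a - q)^2 := by
      simp only [Finset.mul_sum]
      rw [Finset.sum_comm]
      refine Finset.sum_congr rfl fun b _ => ?_
      have := sum_pY p q h1 b
      calc _ = (∑ a, p a * YY q b a) * (s * (p b * (p b - q))) := by
            rw [Finset.sum_mul]
            exact Finset.sum_congr rfl fun a _ => by rw [YY_symm]; ring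
        _ = _ := by rw [this]; ring
    have e4 : ∑ a, p a * ((p a - q) * (s * (p a - q))) = s * ∑ a, p a * (p a - q)^2 := by
      rw [Finset.mul_sum]; exact Finset.sum_congr rfl fun a _ => by ring
    have e5 : ∑ a, p a * ((p a - q) * EE p s (ZZ q s)) = 0 := by
      simp only [← mul_assoc, ← Finset.sum_mul, sum_pg p q h1 hq, zero_mul]
    simp only [key, ih]
    simp only [mul_add (p _), Finset.sum_add_distrib, e3, e4, e5]
    rw [← Finset.sum_mul, h1]
    push_cast; ring

lemma EE_ZZ (h1 : ∑ i, p i = 1) (hq : q = ∑ i, (p i)^2) (s : ℕ) :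
    EE p s (fun x => ZZ q s x ^ 2)
      = s * (s - 1) * (s - 2) * (∑ a, p a * (p a - q)^2) + s * (s - 1) / 2 * (q - q^2) := by
  induction s with
  | zero => rw [EE_zero]; simp [ZZ_zero]
  | succ s ih =>
    rw [EE_succ]
    have key : ∀ a, EE p s (fun x => ZZ q (s+1) (Fin.cons a x) ^ 2)
        = EE p s (fun x => ZZ q s x ^ 2) + 2 * EE p s (fun x => ZZ q s x * SS (YY q a) s x)
          + (s * ∑ b, p b * (YY q a b * YY q a b) + s * (s - 1) * ((p a - q) * (p a - q))) := by
      intro a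
      have e1 := EE_SS2 p h1 (YY q a) (YY q a) s
      rw [sum_pY p q h1] at e1
      rw [← e1, ← EE_mul, ← EE_add, ← EE_add]
      congr 1; funext x
      rw [ZZ_cons]; ring
    have e2 : ∑ a, p a * (2 * EE p s (fun x => ZZ q s x * SS (YY q a) s x))
        = 2 * (s * (s - 1) * ∑ a, p a * (p a - q)^2) := by
      rw [← EE_ZG p q h1 hq]
      simp only [← sum_pSY p q h1]
      simp only [Finset.mul_sum, EE_sum]
      refine Finset.sum_congr rfl fun a _ => ?_
      rw [← EE_mul, ← EE_mul, ← EE_mul]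
      congr 1; funext x; ring
    have e3 : ∑ a, p a * (s * ∑ b, p b * (YY q a b * YY q a b)) = s * (q - q^2) := by
      have : ∀ a, ∑ b, p b * (YY q a b * YY q a b) = p a - 2 * q * p a + q^2 := by
        intro a
        have : ∀ b, p b * (YY q a b * YY q a b)
          = (1 - 2 * q) * (if a = b then p b else 0) + q^2 * p b := by
          intro b; unfold YY; split_ifs <;> ring
        simp only [this, Finset.sum_add_distrib, ← Finset.mul_sum, h1]
        simp; ring
      simp only [this]
      have : ∀ a, p a * (s * (p a - 2 * q * p a + q^2))
        = s * (1 - 2 * q) * (p a)^2 + s * q^2 * p a := by intro a; ring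
      simp only [this, Finset.sum_add_distrib, ← Finset.mul_sum, h1, ← hq]
      ring
    have e4 : ∑ a, p a * (s * (s - 1) * ((p a - q) * (p a - q)))
        = s * (s - 1) * ∑ a, p a * (p a - q)^2 := by
      rw [Finset.mul_sum]; exact Finset.sum_congr rfl fun a _ => by ring
    simp only [key, ih]
    simp only [mul_add (p _), Finset.sum_add_distrib, e2, e3, e4]
    simp only [← Finset.sum_mul, h1]
    push_cast; ring
end

lemma W_bound {n : ℕ} (p : Fin n → ℝ) (h0 : ∀ i, 0 ≤ p i) (h1 : ∑ i, p i = 1) (q a v : ℝ)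
    (hq : q = ∑ i, (p i)^2) (ha : 0 ≤ a) (haq : a^2 = q) (hv : v * n = 1) :
    ∑ i, p i * (p i - q)^2 ≤ a * (a^2 - v) ∧ v ≤ a^2 := by
  have hd : ∑ i, (p i - v)^2 = a^2 - v := by
    have : ∀ i, (p i - v)^2 = (p i)^2 - 2 * v * p i + v^2 := by intro i; ring
    simp only [this, Finset.sum_add_distrib, Finset.sum_sub_distrib, ← Finset.mul_sum, h1, ← hq]
    simp only [Finset.sum_const, Finset.card_univ, Fintype.card_fin, nsmul_eq_mul]
    rw [haq]; linear_combination v * hv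
  constructor
  · have hW : ∑ i, p i * (p i - v)^2 = ∑ i, p i * (p i - q)^2 + (q - v)^2 := by
      have : ∀ i, p i * (p i - v)^2 = p i * (p i - q)^2 + 2 * (q - v) * (p i)^2
          + (v^2 - q^2) * p i := by intro i; ring
      simp only [this, Finset.sum_add_distrib, ← Finset.mul_sum, h1, ← hq]
      ring
    have hle : ∑ i, p i * (p i - v)^2 ≤ ∑ i, a * (p i - v)^2 := by
      refine Finset.sum_le_sum fun i _ => mul_le_mul_of_nonneg_right ?_ (sq_nonneg _)
      refine abs_le_of_sq_le_sq' ?_ ha |>.2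
      rw [haq, hq]
      exact Finset.single_le_sum (f := fun i => (p i)^2) (fun i _ => sq_nonneg _) (Finset.mem_univ i)
    rw [← Finset.mul_sum, hd] at hle
    nlinarith [sq_nonneg (q - v)]
  · have : 0 ≤ ∑ i, (p i - v)^2 := Finset.sum_nonneg fun i _ => sq_nonneg _
    linarith

lemma final_ineq (s a u : ℝ) (hu : 0 < u) (hu1 : u ≤ 1) (hsu : 160 ≤ s * u) (hau : u ≤ a)  :
    2 * (s - 2) * (a * (a^2 - u^2)) + a^2 ≤ s * (s - 1) * a^4 / 80 := by
  have ha : 0 < a := lt_of_lt_of_le hu hau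
  have hs : 160 ≤ s := by nlinarith
  suffices h : 2 * (s - 2) * (a^2 - u^2) + a ≤ s * (s - 1) * a^3 / 80 by
    have := mul_le_mul_of_nonneg_left h ha.le
    nlinarith
  have hsa : 160 ≤ s * a := by nlinarith
  have e : s * (s - 1) * a^3 / 80 = 2 * (s - 1) * a^2 + (s - 1) * a^2 * (s * a - 160) / 80 := by
    ring
  rw [e]
  rcases le_total a (2 * u) with h | h
  · have h1 : 0 ≤ (s - 1) * a^2 * (s * a - 160) / 80 := by
      have : 0 ≤ s - 1 := by linarith
      have : 0 ≤ s * a - 160 := by linarith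
      positivity
    have h2 : 158 * u ≤ (s - 2) * u * u := by
      apply mul_le_mul_of_nonneg_right _ hu.le
      nlinarith
    nlinarith [sq_nonneg a]
  · have h3 : 160 ≤ s * a - 160 := by nlinarith
    have h2 : a ≤ (s - 1) * a^2 := by
      have : 1 * a ≤ ((s - 1) * a) * a := by
        apply mul_le_mul_of_nonneg_right _ ha.le
        by_contra hc
        push Not at hc
        have : a < 1 ∨ 1 ≤ a := lt_or_ge _ _
        rcases this with h | h <;> nlinarith
      nlinarith
    have h4 : (s - 1) * a^2 * 160 ≤ (s - 1) * a^2 * (s * a - 160) := by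
      apply mul_le_mul_of_nonneg_left h3
      have : 0 ≤ s - 1 := by linarith
      positivity
    have : 0 ≤ (s - 2) * u^2 := by
      have : 0 ≤ s - 2 := by linarith
      positivity
    nlinarith [sq_nonneg a]

/-- collision-based `ℓ₂²` estimation: for a distribution `p` on
`[n]` and an integer `s ≥ 160·√n`, drawing `s` i.i.d. samples `x` from `p` and
letting `X := collisions x`, the probability (written as a sum over all sample
sequences) that `|X/C(s,2) − ‖p‖₂²| ≥ ‖p‖₂²/2` is at most `0.1`. -/
theorem stmt13 (n : ℕ) (p : Fin n → ℝ) (hp : IsDist p) (s : ℕ)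
    (hs : 160 * Real.sqrt n ≤ (s : ℝ)) :
    (∑ x : Fin s → Fin n,
        if (∑ i, (p i) ^ 2) / 2 ≤
            |(collisions x : ℝ) / ((s : ℝ) * ((s : ℝ) - 1) / 2) - ∑ i, (p i) ^ 2|
        then (∏ j, p (x j)) else 0)
      ≤ 0.1 := by
  obtain ⟨h0, h1⟩ := hp
  have hn : 0 < n := by
    rcases Nat.eq_zero_or_pos n with h | h
    · subst h; simp at h1
    · exact h
  have hnR : (1:ℝ) ≤ n := by exact_mod_cast hn
  have hr1 : 1 ≤ Real.sqrt n := by rw [Real.one_le_sqrt]; exact hnR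
  have hrr : Real.sqrt n ^ 2 = n := Real.sq_sqrt (by linarith)
  obtain ⟨q, hq⟩ : ∃ q, q = ∑ i, (p i)^2 := ⟨_, rfl⟩
  obtain ⟨a, ha⟩ : ∃ a, a = Real.sqrt q := ⟨_, rfl⟩
  have hq0 : 0 ≤ q := by rw [hq]; positivity
  have haq : a^2 = q := by rw [ha]; exact Real.sq_sqrt hq0
  have ha0 : 0 ≤ a := by rw [ha]; positivity
  obtain ⟨u, hu⟩ : ∃ u, u = (Real.sqrt n)⁻¹ := ⟨_, rfl⟩
  have hu0 : 0 < u := by rw [hu]; positivity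
  have hur : u * Real.sqrt n = 1 := by rw [hu]; exact inv_mul_cancel₀ (by positivity)
  have hu1 : u ≤ 1 := by nlinarith
  have hsu : 160 ≤ s * u := by nlinarith
  have hs160 : (160:ℝ) ≤ s := by nlinarith
  have hv : u^2 * n = 1 := by rw [← hrr, ← mul_pow, hur, one_pow]
  obtain ⟨hW, hva⟩ := W_bound p h0 h1 q a (u^2) hq ha0 haq hv
  have hau : u ≤ a := abs_le_of_sq_le_sq' hva ha0 |>.2
  have hfin := final_ineq s a u hu0 hu1 hsu hau
  have hvar := EE_ZZ p q h1 hq s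
  rw [← hq]
  obtain ⟨C, hC⟩ : ∃ C : ℝ, C = (s : ℝ) * ((s : ℝ) - 1) / 2 := ⟨_, rfl⟩
  have hC0 : 0 < C := by rw [hC]; nlinarith
  have hqpos : 0 < q := by rw [← haq]; have := lt_of_lt_of_le hu0 hau; positivity
  have hVle : EE p s (fun x => ZZ q s x ^ 2) ≤ (C * q / 2)^2 * 0.1 := by
    rw [hvar, ← hC]
    have e1 : (s:ℝ) * (s - 1) * (s - 2) * ∑ i, p i * (p i - q)^2
        ≤ C * (2 * (s - 2) * (a * (a^2 - u^2))) := by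
      have : (s:ℝ) * (s - 1) * (s - 2) = C * (2 * (s - 2)) := by rw [hC]; ring
      rw [this, mul_assoc C]
      apply mul_le_mul_of_nonneg_left _ hC0.le
      exact mul_le_mul_of_nonneg_left hW (by linarith)
    have e2 := mul_le_mul_of_nonneg_left hfin hC0.le
    have e3 : C * (s * (s - 1) * a^4 / 80) = (C * q / 2)^2 * 0.1 := by
      rw [← haq]
      have : (s:ℝ) * (s - 1) = 2 * C := by rw [hC]; ring
      rw [this]; ring
    have e4 : C * (q - q^2) ≤ C * a^2 := by
      rw [haq]; apply mul_le_mul_of_nonneg_left _ hC0.le; nlinarith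
    rw [e3] at e2
    linarith
  have hT : 0 < (C * q / 2)^2 := by positivity
  rw [← hC]
  refine le_trans ?_ ((div_le_iff₀' hT).2 hVle)
  rw [EE, Finset.sum_div]
  refine Finset.sum_le_sum fun x _ => ?_
  have hw : 0 ≤ ∏ j, p (x j) := Finset.prod_nonneg fun j _ => h0 _
  split_ifs with h
  · rw [le_div_iff₀ hT]
    apply mul_le_mul_of_nonneg_left _ hw
    have hz : ZZ q s x = C * ((collisions x : ℝ) / C - q) := by
      unfold ZZ; rw [← hC]; field_simp
    rw [hz, mul_pow, ← sq_abs ((collisions x : ℝ) / C - q), mul_div_assoc, mul_pow]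
    gcongr
  · positivity
end

section
/- Let δ ∈ (0, 1/2), let s_min > 0, let t be a positive integer, let i* ∈ {0,1,...,t}, and let f* > 0 satisfy 2^{i*−1}·s_min < f*. Let I be a random variable taking values in {0,1,...,t} such that P(I ≥ i) ≤ (δ/2)^{i − i*} for every i ≥ i*, and let S be a random variable satisfying S ≤ Σ_{j=0}^{I} 2^j·s_min almost surely. Then E[S] ≤ 6·f*. -/
open MeasureTheory Finset

/-- expected sample complexity of the doubling search: let
`δ ∈ (0,1/2)`, `smin > 0`, `t` a positive integer, `i* ∈ {0,…,t}`, and `f* > 0`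
with `2^{i*−1}·smin < f*`.  If the random round index `I` takes values in
`{0,…,t}` and satisfies `P(I ≥ i) ≤ (δ/2)^{i−i*}` for all `i ≥ i*`, and the
random sample count `S` satisfies `S ≤ Σ_{j=0}^{I} 2^j·smin` almost surely, then
`E[S] ≤ 6·f*`. -/
theorem stmt14 {Ω : Type*} [MeasurableSpace Ω] (μ : Measure Ω)
    [IsProbabilityMeasure μ]
    (δ smin fstar : ℝ) (t istar : ℕ) (ht : 0 < t)
    (hδ : δ ∈ Set.Ioo (0:ℝ) (1/2)) (hsmin : 0 < smin) (histar : istar ≤ t)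
    (hfstar : (2:ℝ) ^ ((istar : ℤ) - 1) * smin < fstar)
    (I : Ω → ℕ) (hImeas : Measurable I) (hIt : ∀ ω, I ω ≤ t)
    (hItail : ∀ i : ℕ, istar ≤ i → (μ {ω | i ≤ I ω}).toReal ≤ (δ / 2) ^ (i - istar))
    (S : Ω → ℝ) (hSmeas : Measurable S)
    (hS : ∀ᵐ ω ∂μ, S ω ≤ ∑ j ∈ Finset.range (I ω + 1), 2 ^ j * smin) :
    ∫ ω, S ω ∂μ ≤ 6 * fstar := by
  have hf : (2:ℝ) ^ istar * smin < 2 * fstar := by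
    rw [zpow_sub_one₀ (by norm_num), zpow_natCast] at hfstar
    linarith
  have hpos : (0:ℝ) < 2 ^ istar * smin := by positivity
  by_cases hint : Integrable S μ
  swap
  · rw [integral_undef hint]; linarith
  have hms : ∀ j : ℕ, MeasurableSet {ω | j ≤ I ω} := fun j =>
    measurableSet_le measurable_const hImeas
  have hGi : ∀ j ∈ Finset.range (t + 1),
      Integrable (Set.indicator {ω | j ≤ I ω} (fun _ => (2:ℝ) ^ j * smin)) μ := fun j _ =>
    (integrable_const _).indicator (hms j)
  have h1 : ∫ ω, S ω ∂μ ≤ ∫ ω, ∑ j ∈ Finset.range (t + 1),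
      Set.indicator {ω | j ≤ I ω} (fun _ => (2:ℝ) ^ j * smin) ω ∂μ := by
    refine integral_mono_ae hint (integrable_finsetSum _ hGi) ?_
    filter_upwards [hS] with ω hω
    refine hω.trans (le_of_eq ?_)
    simp only [Set.indicator_apply, Set.mem_setOf_eq]
    rw [← Finset.sum_filter]
    refine Finset.sum_congr ?_ (fun _ _ => rfl)
    ext j
    have := hIt ω
    simp only [Finset.mem_range, Finset.mem_filter]
    omega
  rw [integral_finsetSum _ hGi] at h1
  have h2 : ∀ j, ∫ ω, Set.indicator {ω | j ≤ I ω} (fun _ => (2:ℝ) ^ j * smin) ω ∂μ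
      = (μ {ω | j ≤ I ω}).toReal * 2 ^ j * smin := by
    intro j
    rw [integral_indicator_const _ (hms j), smul_eq_mul, Measure.real, mul_assoc]
  simp only [h2] at h1
  rw [← Finset.sum_mul] at h1
  have h3 : ∀ n : ℕ, ∑ j ∈ Finset.range n, (μ {ω | j ≤ I ω}).toReal * 2 ^ j ≤ (2:ℝ) ^ n := by
    intro n
    induction n with
    | zero => simp
    | succ k ih =>
      rw [Finset.sum_range_succ, pow_succ]
      have hp : (μ {ω | k ≤ I ω}).toReal ≤ 1 := measureReal_le_one
      have : (0:ℝ) < 2 ^ k := by positivity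
      nlinarith
  have h4 : ∀ m : ℕ, ∑ j ∈ Finset.range (istar + m), (μ {ω | j ≤ I ω}).toReal * 2 ^ j
      ≤ (2:ℝ) ^ istar * (3 - 2 * (1 / 2) ^ m) := by
    intro m
    induction m with
    | zero => have := h3 istar; norm_num; linarith
    | succ k ih =>
      rw [← add_assoc, Finset.sum_range_succ]
      have hp := hItail (istar + k) (by omega)
      rw [Nat.add_sub_cancel_left] at hp
      have hq : (δ / 2) ^ k * 2 ^ k ≤ (1 / 2 : ℝ) ^ k := by
        rw [← mul_pow]
        have := hδ.1
        have := hδ.2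
        exact pow_le_pow_left₀ (by linarith) (by linarith) k
      have hr : (μ {ω | istar + k ≤ I ω}).toReal * 2 ^ (istar + k)
          ≤ (2:ℝ) ^ istar * (1 / 2) ^ k := by
        calc _ ≤ (δ / 2) ^ k * 2 ^ (istar + k) := by gcongr
          _ = 2 ^ istar * ((δ / 2) ^ k * 2 ^ k) := by rw [pow_add]; ring
          _ ≤ _ := by gcongr
      rw [pow_succ (1 / 2 : ℝ)]
      linarith
  have h5 := h4 (t + 1 - istar)
  rw [show istar + (t + 1 - istar) = t + 1 by omega] at h5
  have h6 : (2:ℝ) ^ istar * (3 - 2 * (1 / 2) ^ (t + 1 - istar)) ≤ 2 ^ istar * 3 := by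
    gcongr
    have : (0:ℝ) < (1 / 2) ^ (t + 1 - istar) := by positivity
    linarith
  have h7 := mul_le_mul_of_nonneg_right (h5.trans h6) hsmin.le
  linarith
end

section
/- For every x ∈ ℝ, Σ_{i=0}^∞ x^i/⌊i/2⌋! = (1+x)·e^{x²}. Moreover, for every x ∈ (0, 1.33], x² + x³ ≤ Σ_{i=2}^∞ x^i/⌊i/2⌋! < x² + x³ + 3x⁴. -/
theorem aux_hasSum (x : ℝ) : HasSum (fun i : ℕ => x ^ i / (Nat.factorial (i / 2) : ℝ))
    ((1 + x) * Real.exp (x ^ 2)) := by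
  have h : HasSum (fun n : ℕ => (x ^ 2) ^ n / (Nat.factorial n : ℝ)) (Real.exp (x ^ 2)) := by
    rw [Real.exp_eq_exp_ℝ]
    exact NormedSpace.expSeries_div_hasSum_exp (x ^ 2)
  have h2 := h.mul_left x
  rw [add_mul, one_mul]
  refine HasSum.even_add_odd ?_ ?_
  · convert h using 2 with n
    rw [pow_mul, Nat.mul_div_cancel_left n (by norm_num)]
  · have e : (fun n : ℕ => x ^ (2 * n + 1) / (Nat.factorial ((2 * n + 1) / 2) : ℝ))
        = fun n : ℕ => x * ((x ^ 2) ^ n / (Nat.factorial n : ℝ)) := by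
      funext n
      rw [pow_succ, pow_mul, show (2 * n + 1) / 2 = n by omega]
      ring
    rw [e]
    exact h2

theorem aux_exp_s18 (x : ℝ) (h0 : 0 < x) (h1 : x ≤ 1.33) :
    (1 + x) * (Real.exp (x ^ 2) - 1 - x ^ 2) < 3 * x ^ 4 := by
  obtain ⟨z, hz⟩ : ∃ z, z = x ^ 2 / 2 := ⟨_, rfl⟩
  have hx : x ^ 2 = z + z := by rw [hz]; ring
  have hx4 : x ^ 4 = 4 * z ^ 2 := by rw [hz]; ring
  have z0 : 0 < z := by rw [hz]; positivity
  have z1 : z ≤ 0.9 := by rw [hz]; nlinarith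
  have hb := Real.exp_bound' z0.le (by linarith) (n := 3) (by norm_num)
  norm_num [Finset.sum_range_succ, Nat.factorial] at hb
  have hb' : Real.exp z ≤ 1 + z + z ^ 2 / 2 + 2 * z ^ 3 / 9 := by linarith
  have he := mul_le_mul hb' hb' (Real.exp_pos z).le (by positivity)
  have z2 : z ^ 2 ≤ 0.9 ^ 2 := by gcongr
  have z3 : z ^ 3 ≤ 0.9 ^ 3 := by gcongr
  have z4 : z ^ 4 ≤ 0.9 ^ 4 := by gcongr
  have hq : 2 + 13 / 9 * z + 25 / 36 * z ^ 2 + 2 / 9 * z ^ 3 + 4 / 81 * z ^ 4 ≤ 4.1 := by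
    norm_num at *; linarith
  have hq2 := mul_le_mul_of_nonneg_left hq (sq_nonneg z)
  have hE : Real.exp (x ^ 2) - 1 - x ^ 2 ≤ 4.1 * z ^ 2 := by
    rw [hx, Real.exp_add]
    nlinarith
  have zz : 0 < z ^ 2 := by positivity
  calc _ ≤ (1 + x) * (4.1 * z ^ 2) := by gcongr
    _ ≤ (1 + 1.33) * (4.1 * z ^ 2) := by gcongr
    _ < 3 * x ^ 4 := by rw [hx4]; norm_num; linarith


/-- the power series `Σ xⁱ/⌊i/2⌋!`: for every real `x`,
`Σ_{i=0}^∞ xⁱ/⌊i/2⌋! = (1+x)·e^{x²}`, and for every `x ∈ (0, 1.33]`,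
`x² + x³ ≤ Σ_{i=2}^∞ xⁱ/⌊i/2⌋! < x² + x³ + 3x⁴`. -/
theorem stmt18 :
    (∀ x : ℝ, ∑' i : ℕ, x ^ i / (Nat.factorial (i / 2) : ℝ)
      = (1 + x) * Real.exp (x ^ 2)) ∧
    ∀ x : ℝ, x ∈ Set.Ioc (0:ℝ) 1.33 →
      x ^ 2 + x ^ 3 ≤ (∑' i : ℕ, x ^ (i + 2) / (Nat.factorial ((i + 2) / 2) : ℝ)) ∧
      (∑' i : ℕ, x ^ (i + 2) / (Nat.factorial ((i + 2) / 2) : ℝ))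
        < x ^ 2 + x ^ 3 + 3 * x ^ 4 := by
  refine ⟨fun x => (aux_hasSum x).tsum_eq, fun x ⟨h0, h1⟩ => ?_⟩
  have hs := ((hasSum_nat_add_iff' 2).mpr (aux_hasSum x)).tsum_eq
  rw [hs]
  norm_num [Finset.sum_range_succ]
  have ha := aux_exp_s18 x h0 h1
  have hb := Real.add_one_le_exp (x ^ 2)
  constructor
  · nlinarith
  · nlinarith
end
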